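/- Perimeter bounds diameter for planar convex bodies: if K is a nonempty compact convex subset of ℝ² with nonempty interior, then 2 · diam(K) ≤ ℋ¹(∂K); equivalently, the diameter of K is at most half of its perimeter. -/

import Mathlib

open Metric MeasureTheory

/-!
Let `U` be a bounded open set and `f` a linear functional. Over every `t ∈ f(U)`, a line inside the
level set `f = t` through a point `γ t ∈ U` leaves `U` on both sides of `γ t`. If `γ` is chosen
measurably, the boundary splits into two measurable parts, each of which `f` maps onto `f(U)`; as
`f` is `‖f‖`-Lipschitz, `2 |f(U)| ≤ ‖f‖ ℋ¹(∂U)`. When `U` is connected, `f(U)` is an interval, and a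
functional `f` with `‖f‖ ≤ 1` and `f (x - y) = ‖x - y‖` gives `2 ‖x - y‖ ≤ ℋ¹(∂U)`. The interior of
a convex body is connected and dense in it.
-/

open Bornology Filter Set
open scoped NNReal

theorem inter_frontier_nonempty_of_isPreconnected {X : Type*} [TopologicalSpace X] {s t : Set X}
    (hs : IsPreconnected s) (h_inter : (s ∩ t).Nonempty) (h_diff : (s \ t).Nonempty) :
    (s ∩ frontier t).Nonempty := by
  by_contra h_empty
  have h_off_frontier : ∀ x ∈ s, x ∈ closure t → x ∈ interior t := fun x hxs hxt ↦
    of_not_not fun hx ↦ h_empty ⟨x, hxs, hxt, hx⟩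
  obtain ⟨x, hxs, hxt⟩ := h_inter
  obtain ⟨y, hys, hyt⟩ := h_diff
  obtain ⟨z, -, hz_int, hz_ext⟩ := hs (interior t) (closure t)ᶜ isOpen_interior
    isClosed_closure.isOpen_compl
    (fun z hz ↦ (em (z ∈ closure t)).imp (h_off_frontier z hz) id)
    ⟨x, hxs, h_off_frontier x hxs (subset_closure hxt)⟩
    ⟨y, hys, fun hy ↦ hyt (interior_subset (h_off_frontier y hys hy))⟩
  exact hz_ext (interior_subset_closure hz_int)

theorem exists_measurable_selection_of_isOpen {ι X Y : Type*} [Nonempty ι]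
    [TopologicalSpace X] [MeasurableSpace X] [BorelSpace X]
    [TopologicalSpace Y] [SecondCountableTopology Y] [MeasurableSpace Y] [OpensMeasurableSpace Y]
    {σ : ι → Y → X} (hσ : ∀ i, Continuous (σ i)) {U : Set X} (hU : IsOpen U) :
    ∃ k : Y → ι, Measurable (fun y ↦ σ (k y) y) ∧ ∀ y, (∃ i, σ i y ∈ U) → σ (k y) y ∈ U := by
  classical
  have h_open : ∀ i, IsOpen (σ i ⁻¹' U) := fun i ↦ hU.preimage (hσ i)
  obtain ⟨I, hI_countable, hI⟩ := TopologicalSpace.isOpen_iUnion_countable _ h_open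
  obtain ⟨e, he⟩ : ∃ e : ℕ → ι, I ⊆ range e := countable_iff_exists_subset_range.mp hI_countable
  let W : Set Y := ⋃ i, σ i ⁻¹' U
  let p : ℕ → Y → Prop := fun n y ↦ y ∈ W → σ (e n) y ∈ U
  have exists_p : ∀ y, ∃ n, p n y := by
    intro y
    by_cases hy : y ∈ W
    · obtain ⟨i, hi, hiy⟩ := mem_iUnion₂.mp (hI.symm ▸ hy : y ∈ ⋃ i ∈ I, σ i ⁻¹' U)
      obtain ⟨n, rfl⟩ := he hi
      exact ⟨n, fun _ ↦ hiy⟩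
    · exact ⟨0, fun h ↦ absurd h hy⟩
  have measurableSet_p : ∀ n, MeasurableSet {y | p n y} := fun n ↦
    (isOpen_iUnion h_open).measurableSet.imp (h_open (e n)).measurableSet
  exact ⟨fun y ↦ e (Nat.find (exists_p y)),
    Measurable.find (f := fun n ↦ σ (e n)) (fun n ↦ (hσ (e n)).measurable) measurableSet_p exists_p,
    fun y hy ↦ Nat.find_spec (exists_p y) (mem_iUnion.mpr hy)⟩

theorem two_mul_volume_le_mul_hausdorffMeasure_of_subset_image {X : Type*} [EMetricSpace X]
    [MeasurableSpace X] [BorelSpace X] {C : ℝ≥0} {f : X → ℝ} (hf : LipschitzWith C f)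
    {F S : Set X} (hS : MeasurableSet S) {T : Set ℝ}
    (h_inter : T ⊆ f '' (F ∩ S)) (h_diff : T ⊆ f '' (F \ S)) :
    2 * volume T ≤ C * μH[1] F := by
  have volume_le : ∀ {A : Set X}, T ⊆ f '' A → volume T ≤ C * μH[1] A := fun {A} hA ↦
    calc volume T ≤ volume (f '' A) := measure_mono hA
      _ = μH[1] (f '' A) := by rw [hausdorffMeasure_real]
      _ ≤ C * μH[1] A := by simpa using hf.hausdorffMeasure_image_le zero_le_one A
  calc 2 * volume T = volume T + volume T := two_mul _
    _ ≤ C * μH[1] (F ∩ S) + C * μH[1] (F \ S) := add_le_add (volume_le h_inter) (volume_le h_diff)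
    _ = C * μH[1] F := by rw [← mul_add, measure_inter_add_sdiff _ hS]

theorem edist_le_volume_of_isPreconnected {s : Set ℝ} (hs : IsPreconnected s) {a b : ℝ}
    (ha : a ∈ s) (hb : b ∈ s) : edist a b ≤ volume s :=
  calc edist a b = volume (uIcc a b) := by
        rw [Real.volume_interval, edist_dist, dist_comm, Real.dist_eq]
    _ ≤ volume s := measure_mono (hs.ordConnected.uIcc_subset ha hb)

theorem exists_ne_zero_apply_eq_zero_of_one_lt_rank {R M : Type*} [Ring R] [StrongRankCondition R]
    [AddCommGroup M] [Module R M] (hM : 1 < Module.rank R M) (f : M →ₗ[R] R) :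
    ∃ v ≠ 0, f v = 0 := by
  by_contra! h
  have h_inj : Function.Injective f :=
    (injective_iff_map_eq_zero f).mpr fun v hv ↦ of_not_not fun hv0 ↦ h v hv0 hv
  have h_rank := LinearMap.lift_rank_le_of_injective f h_inj
  rw [Module.rank_self, Cardinal.lift_one, Cardinal.lift_le_one_iff] at h_rank
  exact hM.not_ge h_rank

section NormedSpace

variable {E : Type*} [NormedAddCommGroup E] [NormedSpace ℝ E]

theorem exists_pos_add_smul_mem_frontier {s : Set E} (hs : IsBounded s) {x v : E}
    (hx : x ∈ interior s) (hv : v ≠ 0) : ∃ r : ℝ, 0 < r ∧ x + r • v ∈ frontier s := by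
  have h_unbounded : Tendsto (fun r : ℝ ↦ x + r • v) atTop (cobounded E) := by
    refine (tendsto_const_add_cobounded x).comp (tendsto_norm_atTop_iff_cobounded.mp ?_)
    simp_rw [norm_smul]
    exact tendsto_norm_atTop_atTop.atTop_mul_const (norm_pos_iff.mpr hv)
  obtain ⟨R, hR, hR0⟩ :=
    ((h_unbounded.eventually (isBounded_def.mp hs)).and (eventually_ge_atTop 0)).exists
  have h_ray : IsPreconnected ((fun r : ℝ ↦ x + r • v) '' Ici 0) :=
    isPreconnected_Ici.image _ (by fun_prop)
  obtain ⟨_, ⟨r, hr, rfl⟩, hr_frontier⟩ := inter_frontier_nonempty_of_isPreconnected h_ray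
    ⟨x, ⟨0, self_mem_Ici, by simp⟩, interior_subset hx⟩ ⟨_, ⟨R, hR0, rfl⟩, hR⟩
  refine ⟨r, (mem_Ici.mp hr).lt_of_ne ?_, hr_frontier⟩
  rintro rfl
  exact hr_frontier.2 (by simpa using hx)

variable [MeasurableSpace E] [BorelSpace E]

theorem exists_measurable_section_mem_of_isOpen {f : StrongDual ℝ E} (hf : f ≠ 0) {U : Set E}
    (hU : IsOpen U) :
    ∃ γ : ℝ → E, Measurable γ ∧ (∀ t, f (γ t) = t) ∧ ∀ t ∈ f '' U, γ t ∈ U := by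
  obtain ⟨u, hu⟩ : ∃ u, f u = 1 :=
    f.toLinearMap.surjective_of_ne_zero (ContinuousLinearMap.coe_injective.ne hf) 1
  let σ : E → ℝ → E := fun z t ↦ z + (t - f z) • u
  obtain ⟨k, hk_meas, hk_mem⟩ := exists_measurable_selection_of_isOpen (σ := σ)
    (fun z ↦ by fun_prop) hU
  refine ⟨fun t ↦ σ (k t) t, hk_meas, fun t ↦ by simp [σ, hu], ?_⟩
  rintro _ ⟨z, hz, rfl⟩
  exact hk_mem (f z) ⟨z, by simpa [σ] using hz⟩

theorem two_mul_volume_image_le_nnnorm_mul_perimeter (hE : 1 < Module.rank ℝ E) {U : Set E}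
    (hU : IsOpen U) (hU_bdd : IsBounded U) (f : StrongDual ℝ E) :
    2 * volume (f '' U) ≤ ‖f‖₊ * μH[1] (frontier U) := by
  rcases eq_or_ne f 0 with rfl | hf
  · have h_image : (⇑(0 : StrongDual ℝ E) '' U).Subsingleton := by
      rintro _ ⟨_, _, rfl⟩ _ ⟨_, _, rfl⟩
      rfl
    rw [h_image.measure_zero, mul_zero]
    exact zero_le
  obtain ⟨v, hv, hfv⟩ := exists_ne_zero_apply_eq_zero_of_one_lt_rank hE f.toLinearMap
  obtain ⟨g, -, hgv⟩ := exists_dual_vector ℝ v (norm_ne_zero_iff.mpr hv)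
  have hgv_pos : 0 < g v := by simpa [hgv] using hv
  obtain ⟨γ, hγ_meas, hfγ, hγ_mem⟩ := exists_measurable_section_mem_of_isOpen hf hU
  have hγ_int : ∀ t ∈ f '' U, γ t ∈ interior U := hU.interior_eq.symm ▸ hγ_mem
  have hfγ_add : ∀ t r : ℝ, f (γ t + r • v) = t := fun t r ↦ by
    simp [hfγ, show f v = 0 from hfv]
  let S : Set E := {y | g (γ (f y)) < g y}
  have hS : MeasurableSet S := measurableSet_lt (by fun_prop) (by fun_prop)
  have mem_S_iff : ∀ t r : ℝ, γ t + r • v ∈ S ↔ 0 < r := fun t r ↦ by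
    simp [S, hfγ_add, hgv_pos]
  refine two_mul_volume_le_mul_hausdorffMeasure_of_subset_image f.lipschitz hS
    (fun t ht ↦ ?_) (fun t ht ↦ ?_)
  · obtain ⟨r, hr, hr_frontier⟩ := exists_pos_add_smul_mem_frontier hU_bdd (hγ_int t ht) hv
    exact ⟨_, ⟨hr_frontier, (mem_S_iff t r).mpr hr⟩, hfγ_add t r⟩
  · obtain ⟨r, hr, hr_frontier⟩ :=
      exists_pos_add_smul_mem_frontier hU_bdd (hγ_int t ht) (neg_ne_zero.mpr hv)
    rw [smul_neg, ← neg_smul] at hr_frontier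
    exact ⟨_, ⟨hr_frontier, fun h_mem ↦ by linarith [(mem_S_iff t (-r)).mp h_mem]⟩, hfγ_add t (-r)⟩

theorem two_mul_edist_le_perimeter_of_isOpen (hE : 1 < Module.rank ℝ E) {U : Set E} (hU : IsOpen U)
    (hU_bdd : IsBounded U) (hU_conn : IsPreconnected U) {x y : E} (hx : x ∈ U) (hy : y ∈ U) :
    2 * edist x y ≤ μH[1] (frontier U) := by
  obtain ⟨f, hf_norm, hf⟩ := exists_dual_vector'' ℝ (x - y)
  calc 2 * edist x y = 2 * edist (f x) (f y) := by
        rw [edist_dist, edist_dist, Real.dist_eq, ← map_sub, hf, dist_eq_norm]; simp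
    _ ≤ 2 * volume (f '' U) := by
        gcongr
        exact edist_le_volume_of_isPreconnected (hU_conn.image f f.continuous.continuousOn)
          (mem_image_of_mem f hx) (mem_image_of_mem f hy)
    _ ≤ ‖f‖₊ * μH[1] (frontier U) := two_mul_volume_image_le_nnnorm_mul_perimeter hE hU hU_bdd f
    _ ≤ μH[1] (frontier U) := mul_le_of_le_one_left' (by exact_mod_cast hf_norm)

theorem two_mul_ediam_le_perimeter_of_isOpen (hE : 1 < Module.rank ℝ E) {U : Set E} (hU : IsOpen U)
    (hU_bdd : IsBounded U) (hU_conn : IsPreconnected U) :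
    2 * ediam U ≤ μH[1] (frontier U) := by
  simp only [ediam, ENNReal.mul_iSup, iSup_le_iff]
  exact fun x hx y hy ↦ two_mul_edist_le_perimeter_of_isOpen hE hU hU_bdd hU_conn hx hy

theorem two_mul_diam_le_perimeter_general (hE : 1 < Module.rank ℝ E) {K : Set E}
    (hK_bdd : IsBounded K) (hK_conn : IsPreconnected (interior K))
    (hK_dense : K ⊆ closure (interior K)) :
    ENNReal.ofReal (2 * diam K) ≤ μH[1] (frontier K) :=
  calc ENNReal.ofReal (2 * diam K) = 2 * ediam K := by
        rw [ENNReal.ofReal_mul zero_le_two, diam, ENNReal.ofReal_toReal hK_bdd.ediam_ne_top,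
          ENNReal.ofReal_ofNat]
    _ ≤ 2 * ediam (interior K) := by
        rw [← ediam_closure (interior K)]
        gcongr
    _ ≤ μH[1] (frontier (interior K)) :=
        two_mul_ediam_le_perimeter_of_isOpen hE isOpen_interior
          (hK_bdd.subset interior_subset) hK_conn
    _ ≤ μH[1] (frontier K) := measure_mono frontier_interior_subset

end NormedSpace

/-- Perimeter bounds diameter for planar convex bodies: for a compact convex
body `K ⊆ ℝ²` with nonempty interior, `2 · diam K ≤ ℋ¹(∂K)`. -/
theorem two_mul_diam_le_perimeter
    (K : Set (EuclideanSpace ℝ (Fin 2))) (hK : K.Nonempty)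
    (hKc : IsCompact K) (hKconv : Convex ℝ K)
    (hKint : (interior K).Nonempty) :
    ENNReal.ofReal (2 * diam K) ≤ μH[1] (frontier K) :=
  two_mul_diam_le_perimeter_general (by simp [← Module.finrank_eq_rank])
    hKc.isBounded hKconv.interior.isPreconnected
    (hKconv.closure_interior_eq_closure_of_nonempty_interior hKint ▸ subset_closure)
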